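/- Let β < 0 and let η : (0,∞) → ℝ be twice continuously differentiable, not identically zero, with ∫₀^∞ ( r·η′(r)² + r^{−1}·η(r)² ) dr < ∞, and satisfying (r·η′(r))′ + r·( 64/(8+r²)² + β/r² )·η(r) = 0 for all r > 0. Then β = −1 and there exists c ∈ ℝ with η(r) = c·4r/(8+r²) for all r > 0. (Thus β = −1 is the only negative eigenvalue of the limit problem and it is simple.) -/

import Mathlib

open Real Set Filter MeasureTheory

/-!
In the variable `log r` the equation is a Pöschl–Teller problem. With `T = (r² - 8) / (8 + r²)`,
which satisfies the Riccati equation `r T' = 1 - T²`, the potential is `64 r² / (8 + r²)² =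
2 (1 - T²)`, and the Darboux transform `w = r η' + T η` solves the free equation
`r (r w')' = -β w`. Put `v = r w'`. The finite energy of `η` makes `w² / r` and `v² / r` integrable.
Now `v² + β w²` is constant, and a monotone `f` on `(0, ∞)` with `f / r` integrable vanishes; hence
`v² = -β w²`, so that `r (w v)' = 2 v² ≥ 0` and, by the same principle, `w v = 0`, `v = 0`, and
finally `w = 0`. Since `v = T w - (1 + β) η`, this forces `β = -1`, and `r η' = -T η` is the first
order equation of `4 r / (8 + r²)`.
-/

lemma not_integrableOn_Ioc_zero_inv {b : ℝ} (hb : 0 < b) :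
    ¬ IntegrableOn (fun r : ℝ => r⁻¹) (Ioc 0 b) := by
  rw [← intervalIntegrable_iff_integrableOn_Ioc_of_le hb.le, intervalIntegrable_inv_iff]
  exact not_or.2 ⟨hb.ne, not_not_intro left_mem_uIcc⟩

lemma not_integrableOn_div_of_le_abs {f : ℝ → ℝ} {s : Set ℝ} {ε : ℝ} (hs : MeasurableSet s)
    (hinv : ¬ IntegrableOn (fun r : ℝ => r⁻¹) s) (hε : 0 < ε) (hf : ∀ r ∈ s, ε ≤ |f r|) :
    ¬ IntegrableOn (fun r => f r / r) s := fun hint =>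
  hinv <| (hint.norm.const_mul ε⁻¹).mono' measurable_inv.aestronglyMeasurable <|
    (ae_restrict_iff' hs).2 <| .of_forall fun r hr =>
      calc ‖r⁻¹‖ = ε⁻¹ * (ε / |r|) := by
            rw [norm_inv, norm_eq_abs]
            field_simp
        _ ≤ ε⁻¹ * ‖f r / r‖ := by
            rw [norm_div, norm_eq_abs, norm_eq_abs]
            gcongr
            exact hf r hr

lemma eqOn_zero_of_monotoneOn_of_integrableOn_div {f : ℝ → ℝ} (hf : MonotoneOn f (Ioi 0))
    (hint : IntegrableOn (fun r => f r / r) (Ioi 0)) : EqOn f 0 (Ioi 0) := by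
  intro r hr
  by_contra hne
  rcases lt_or_gt_of_ne hne with hneg | hpos
  · refine not_integrableOn_div_of_le_abs measurableSet_Ioc
      (not_integrableOn_Ioc_zero_inv hr) (neg_pos.2 hneg) (fun x hx => ?_)
      (hint.mono_set Ioc_subset_Ioi_self)
    exact (neg_le_neg (hf hx.1 hr hx.2)).trans (neg_le_abs _)
  · have hsub : Ioi r ⊆ Ioi 0 := Ioi_subset_Ioi (le_of_lt hr)
    refine not_integrableOn_div_of_le_abs measurableSet_Ioi not_integrableOn_Ioi_inv hpos
      (fun x hx => ?_) (hint.mono_set hsub)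
    exact (hf hr (hsub hx) (le_of_lt hx)).trans (le_abs_self _)

lemma integrableOn_div_of_abs_le {f g : ℝ → ℝ} {C : ℝ} (hf : ContinuousOn f (Ioi 0))
    (hg : IntegrableOn (fun r => g r / r) (Ioi 0)) (hfg : ∀ r > 0, |f r| ≤ C * g r) :
    IntegrableOn (fun r => f r / r) (Ioi 0) := by
  have hcont : ContinuousOn (fun r => f r / r) (Ioi 0) :=
    hf.div continuousOn_id fun r hr => ne_of_gt hr
  refine (hg.const_mul C).mono' (hcont.aestronglyMeasurable measurableSet_Ioi) <|
    (ae_restrict_iff' measurableSet_Ioi).2 <| .of_forall fun r (hr : 0 < r) => ?_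
  rw [norm_div, norm_of_nonneg hr.le, norm_eq_abs, ← mul_div_assoc]
  gcongr
  exact hfg r hr

lemma eqOn_zero_of_deriv_nonneg_of_abs_le {f f' g : ℝ → ℝ} {C : ℝ}
    (hf : ∀ r > 0, HasDerivAt f (f' r) r) (hf' : ∀ r > 0, 0 ≤ f' r)
    (hg : IntegrableOn (fun r => g r / r) (Ioi 0)) (hfg : ∀ r > 0, |f r| ≤ C * g r) :
    EqOn f 0 (Ioi 0) := by
  have hcont : ContinuousOn f (Ioi 0) := fun r hr => (hf r hr).continuousAt.continuousWithinAt
  refine eqOn_zero_of_monotoneOn_of_integrableOn_div ?_ (integrableOn_div_of_abs_le hcont hg hfg)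
  refine monotoneOn_of_hasDerivWithinAt_nonneg (f' := f') (convex_Ioi 0) hcont ?_ ?_ <;>
    rw [interior_Ioi]
  exacts [fun r hr => (hf r hr).hasDerivWithinAt, hf']

lemma euler_system_eqOn_zero {β : ℝ} {w v : ℝ → ℝ}
    (hw : ∀ r > 0, HasDerivAt w (v r / r) r) (hv : ∀ r > 0, HasDerivAt v (-β * w r / r) r)
    (hint : IntegrableOn (fun r => (w r ^ 2 + v r ^ 2) / r) (Ioi 0)) :
    EqOn w 0 (Ioi 0) ∧ EqOn v 0 (Ioi 0) := by
  have energy_zero : EqOn (fun r => v r ^ 2 + β * w r ^ 2) 0 (Ioi 0) := by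
    refine eqOn_zero_of_deriv_nonneg_of_abs_le (f' := fun _ => 0) (C := 1 + |β|)
      (fun r hr => ?_) (fun _ _ => le_rfl) hint fun r _ => ?_
    · exact (((hv r hr).pow 2).add (((hw r hr).pow 2).const_mul β)).congr_deriv (by ring)
    · calc |v r ^ 2 + β * w r ^ 2| ≤ |v r ^ 2| + |β * w r ^ 2| := abs_add_le _ _
        _ = v r ^ 2 + |β| * w r ^ 2 := by rw [abs_mul, abs_sq, abs_sq]
        _ ≤ (1 + |β|) * (w r ^ 2 + v r ^ 2) := by
            nlinarith [sq_nonneg (w r), mul_nonneg (abs_nonneg β) (sq_nonneg (v r))]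
  have mul_hasDerivAt : ∀ r > 0, HasDerivAt (fun x => w x * v x) (2 * v r ^ 2 / r) r := by
    intro r hr
    refine ((hw r hr).mul (hv r hr)).congr_deriv ?_
    have henergy : v r ^ 2 + β * w r ^ 2 = 0 := energy_zero hr
    linear_combination -henergy / r
  have mul_zero : EqOn (fun r => w r * v r) 0 (Ioi 0) := by
    refine eqOn_zero_of_deriv_nonneg_of_abs_le (C := 1) mul_hasDerivAt (fun r hr => by positivity)
      hint fun r _ => abs_le.2 ⟨?_, ?_⟩ <;>
      nlinarith [sq_nonneg (w r + v r), sq_nonneg (w r - v r)]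
  have v_zero : EqOn v 0 (Ioi 0) := by
    intro r hr
    have hderiv : 2 * v r ^ 2 / r = 0 := (mul_hasDerivAt r hr).unique <|
      (hasDerivAt_const r 0).congr_of_eventuallyEq (mul_zero.eventuallyEq_of_mem (Ioi_mem_nhds hr))
    simpa [(ne_of_gt hr : r ≠ 0)] using hderiv
  have sq_w_zero : EqOn (fun r => w r ^ 2) 0 (Ioi 0) := by
    refine eqOn_zero_of_deriv_nonneg_of_abs_le (f' := fun _ => 0) (C := 1)
      (fun r hr => ((hw r hr).pow 2).congr_deriv ?_) (fun _ _ => le_rfl) hint fun r _ => ?_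
    · simp [v_zero hr]
    · rw [abs_sq]
      nlinarith [sq_nonneg (v r)]
  exact ⟨fun r hr => pow_eq_zero_iff two_ne_zero |>.1 (sq_w_zero hr), v_zero⟩

lemma exists_eq_const_mul_of_hasDerivAt_mul {s : Set ℝ} {f g a : ℝ → ℝ} (hs : IsOpen s)
    (hs' : IsPreconnected s) (hf : ∀ x ∈ s, HasDerivAt f (a x * f x) x)
    (hg : ∀ x ∈ s, HasDerivAt g (a x * g x) x) (hg₀ : ∀ x ∈ s, g x ≠ 0) :
    ∃ c, ∀ x ∈ s, f x = c * g x := by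
  have hquot : ∀ x ∈ s, HasDerivAt (fun y => f y / g y) 0 x := fun x hx =>
    ((hf x hx).div (hg x hx) (hg₀ x hx)).congr_deriv (by ring)
  obtain ⟨c, hc⟩ := hs.exists_is_const_of_deriv_eq_zero hs'
    (fun x hx => (hquot x hx).differentiableAt.differentiableWithinAt)
    (fun x hx => (hquot x hx).deriv)
  exact ⟨c, fun x hx => (div_eq_iff (hg₀ x hx)).1 (hc x hx)⟩

/-- The Darboux transform `r η' + T η` of `η`, where `u` stands for `r η'`. -/
def darboux (T η u : ℝ → ℝ) (r : ℝ) : ℝ := u r + T r * η r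

/-- The logarithmic derivative `r w'` of the Darboux transform `w` of a solution of
`r (r η')' = -(2 (1 - T²) + β) η`, written without derivatives. -/
def darbouxDeriv (β : ℝ) (T η u : ℝ → ℝ) (r : ℝ) : ℝ := T r * darboux T η u r - (1 + β) * η r

section Darboux

variable {β r : ℝ} {T η u : ℝ → ℝ}

lemma hasDerivAt_darboux (hT : HasDerivAt T ((1 - T r ^ 2) / r) r)
    (hη : HasDerivAt η (u r / r) r) (hu : HasDerivAt u (-(2 * (1 - T r ^ 2) + β) * η r / r) r) :
    HasDerivAt (darboux T η u) (darbouxDeriv β T η u r / r) r := by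
  refine (hu.add (hT.mul hη)).congr_deriv ?_
  unfold darbouxDeriv darboux
  ring

lemma hasDerivAt_darbouxDeriv (hT : HasDerivAt T ((1 - T r ^ 2) / r) r)
    (hη : HasDerivAt η (u r / r) r) (hu : HasDerivAt u (-(2 * (1 - T r ^ 2) + β) * η r / r) r) :
    HasDerivAt (darbouxDeriv β T η u) (-β * darboux T η u r / r) r := by
  refine ((hT.mul (hasDerivAt_darboux hT hη hu)).sub (hη.const_mul (1 + β))).congr_deriv ?_
  unfold darbouxDeriv darboux
  ring

lemma darboux_sq_add_darbouxDeriv_sq_le (hT : T r ^ 2 ≤ 1) :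
    darboux T η u r ^ 2 + darbouxDeriv β T η u r ^ 2 ≤
      (6 + 2 * (1 + β) ^ 2) * (u r ^ 2 + η r ^ 2) := by
  have hw : darboux T η u r ^ 2 ≤ 2 * (u r ^ 2 + η r ^ 2) := by
    calc darboux T η u r ^ 2 ≤ 2 * (u r ^ 2 + (T r * η r) ^ 2) := add_sq_le
      _ ≤ 2 * (u r ^ 2 + η r ^ 2) := by
          rw [mul_pow]
          gcongr
          exact mul_le_of_le_one_left (sq_nonneg _) hT
  have hv : darbouxDeriv β T η u r ^ 2 ≤
      2 * (darboux T η u r ^ 2 + (1 + β) ^ 2 * η r ^ 2) := by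
    calc darbouxDeriv β T η u r ^ 2
        ≤ 2 * ((T r * darboux T η u r) ^ 2 + (-((1 + β) * η r)) ^ 2) := by
          rw [darbouxDeriv, sub_eq_add_neg]
          exact add_sq_le
      _ ≤ 2 * (darboux T η u r ^ 2 + (1 + β) ^ 2 * η r ^ 2) := by
          rw [mul_pow, neg_sq, mul_pow]
          gcongr
          exact mul_le_of_le_one_left (sq_nonneg _) hT
  nlinarith [mul_nonneg (sq_nonneg (1 + β)) (sq_nonneg (u r))]

lemma darboux_eqOn_zero (hT : ∀ r > 0, HasDerivAt T ((1 - T r ^ 2) / r) r)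
    (hT₁ : ∀ r > 0, T r ^ 2 ≤ 1) (hη : ∀ r > 0, HasDerivAt η (u r / r) r)
    (hu : ∀ r > 0, HasDerivAt u (-(2 * (1 - T r ^ 2) + β) * η r / r) r)
    (hint : IntegrableOn (fun r => (u r ^ 2 + η r ^ 2) / r) (Ioi 0)) :
    EqOn (darboux T η u) 0 (Ioi 0) ∧ EqOn (darbouxDeriv β T η u) 0 (Ioi 0) := by
  have hw : ∀ r > 0, HasDerivAt (darboux T η u) (darbouxDeriv β T η u r / r) r :=
    fun r hr => hasDerivAt_darboux (hT r hr) (hη r hr) (hu r hr)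
  have hv : ∀ r > 0, HasDerivAt (darbouxDeriv β T η u) (-β * darboux T η u r / r) r :=
    fun r hr => hasDerivAt_darbouxDeriv (hT r hr) (hη r hr) (hu r hr)
  refine euler_system_eqOn_zero hw hv (integrableOn_div_of_abs_le
    (C := 6 + 2 * (1 + β) ^ 2) ?_ hint fun r hr => ?_)
  · exact fun r hr =>
      (((hw r hr).pow 2).add ((hv r hr).pow 2)).continuousAt.continuousWithinAt
  · rw [abs_of_nonneg (by positivity)]
    exact darboux_sq_add_darbouxDeriv_sq_le (hT₁ r hr)

end Darboux

/-- The eigenfunction `4 r / (8 + r²)` of the limit problem for the eigenvalue `-1`. -/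
noncomputable def limitEigenfunction (r : ℝ) : ℝ := 4 * r / (8 + r ^ 2)

/-- The superpotential `T = -r φ' / φ` of the eigenfunction `φ = 4 r / (8 + r²)`. -/
noncomputable def superpotential (r : ℝ) : ℝ := (r ^ 2 - 8) / (8 + r ^ 2)

lemma superpotential_sq_le_one (r : ℝ) : superpotential r ^ 2 ≤ 1 := by
  rw [superpotential, div_pow, div_le_one (by positivity)]
  nlinarith [sq_nonneg r]

lemma hasDerivAt_eight_add_sq (r : ℝ) : HasDerivAt (fun x : ℝ => 8 + x ^ 2) (2 * r) r := by
  simpa using (hasDerivAt_pow 2 r).const_add 8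

lemma hasDerivAt_superpotential {r : ℝ} (hr : r ≠ 0) :
    HasDerivAt superpotential ((1 - superpotential r ^ 2) / r) r := by
  have hden : 8 + r ^ 2 ≠ 0 := by positivity
  have hnum : HasDerivAt (fun x : ℝ => x ^ 2 - 8) (2 * r) r := by
    simpa using (hasDerivAt_pow 2 r).sub_const 8
  refine (hnum.div (hasDerivAt_eight_add_sq r) hden).congr_deriv ?_
  unfold superpotential
  field_simp
  ring

lemma limitEigenfunction_pos {r : ℝ} (hr : 0 < r) : 0 < limitEigenfunction r := by
  unfold limitEigenfunction
  positivity

lemma hasDerivAt_limitEigenfunction {r : ℝ} (hr : r ≠ 0) :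
    HasDerivAt limitEigenfunction (-superpotential r / r * limitEigenfunction r) r := by
  have hden : 8 + r ^ 2 ≠ 0 := by positivity
  refine (((hasDerivAt_id r).const_mul 4).div (hasDerivAt_eight_add_sq r) hden).congr_deriv ?_
  simp only [superpotential, limitEigenfunction, id]
  field_simp
  ring

lemma mul_limitPotential_eq_superpotential (β : ℝ) {r : ℝ} (hr : r ≠ 0) :
    r * (64 / (8 + r ^ 2) ^ 2 + β / r ^ 2) = (2 * (1 - superpotential r ^ 2) + β) / r := by
  have hden : 8 + r ^ 2 ≠ 0 := by positivity
  unfold superpotential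
  field_simp
  ring

lemma hasDerivAt_mul_deriv_of_limit_equation {β : ℝ} {η : ℝ → ℝ} (hreg : ContDiffOn ℝ 2 η (Ioi 0))
    (heq : ∀ r > (0 : ℝ), deriv (fun x => x * deriv η x) r +
      r * (64 / (8 + r ^ 2) ^ 2 + β / r ^ 2) * η r = 0) {r : ℝ} (hr : 0 < r) :
    HasDerivAt (fun x => x * deriv η x) (-(2 * (1 - superpotential r ^ 2) + β) * η r / r) r := by
  have hdiff : DifferentiableOn ℝ (deriv η) (Ioi 0) :=
    (hreg.deriv_of_isOpen (m := 1) isOpen_Ioi (by norm_num)).differentiableOn one_ne_zero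
  refine (differentiableAt_id.mul
    (hdiff.differentiableAt (Ioi_mem_nhds hr))).hasDerivAt.congr_deriv ?_
  refine (eq_neg_of_add_eq_zero_left (heq r hr)).trans ?_
  rw [mul_limitPotential_eq_superpotential β hr.ne']
  ring

theorem limit_problem_unique_negative_eigenvalue_general
    (β : ℝ) (η : ℝ → ℝ)
    (hreg : ContDiffOn ℝ 2 η (Ioi 0))
    (hne : ∃ r > (0 : ℝ), η r ≠ 0)
    (hint : IntegrableOn (fun r => r * deriv η r ^ 2 + η r ^ 2 / r) (Ioi 0))
    (heq : ∀ r > (0 : ℝ),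
      deriv (fun x => x * deriv η x) r +
        r * (64 / (8 + r ^ 2) ^ 2 + β / r ^ 2) * η r = 0) :
    β = -1 ∧ ∃ c : ℝ, ∀ r > (0 : ℝ), η r = c * (4 * r / (8 + r ^ 2)) := by
  have hη : ∀ r > 0, HasDerivAt η (deriv η r) r := fun r hr =>
    ((hreg.differentiableOn two_ne_zero).differentiableAt (Ioi_mem_nhds hr)).hasDerivAt
  have henergy : IntegrableOn (fun r => ((r * deriv η r) ^ 2 + η r ^ 2) / r) (Ioi 0) :=
    hint.congr_fun (fun r (hr : 0 < r) => by field_simp) measurableSet_Ioi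
  obtain ⟨hw, hv⟩ := darboux_eqOn_zero (fun r hr => hasDerivAt_superpotential hr.ne')
    (fun r _ => superpotential_sq_le_one r)
    (fun r hr => (hη r hr).congr_deriv (by field_simp))
    (fun r hr => hasDerivAt_mul_deriv_of_limit_equation hreg heq hr) henergy
  constructor
  · obtain ⟨r, hr, hηr⟩ := hne
    have hmul : (1 + β) * η r = 0 := by simpa [darbouxDeriv, hw hr] using hv hr
    linarith [(mul_eq_zero.1 hmul).resolve_right hηr]
  · refine exists_eq_const_mul_of_hasDerivAt_mul (g := limitEigenfunction)
      (a := fun r => -superpotential r / r) isOpen_Ioi isPreconnected_Ioi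
      (fun r (hr : 0 < r) => (hη r hr).congr_deriv ?_)
      (fun r hr => hasDerivAt_limitEigenfunction (ne_of_gt hr))
      (fun r hr => (limitEigenfunction_pos hr).ne')
    have hwr : r * deriv η r + superpotential r * η r = 0 := hw hr
    field_simp
    linear_combination hwr

/-- `β = −1` is the only negative eigenvalue of the limit singular
problem `−(rη′)′ = r(64/(8+r²)² + β/r²)η` on `(0,∞)` with finite weighted energy, and
it is simple: any such eigenfunction is a multiple of `4r/(8+r²)`. -/
theorem limit_problem_unique_negative_eigenvalue
    (β : ℝ) (hβ : β < 0) (η : ℝ → ℝ)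
    (hreg : ContDiffOn ℝ 2 η (Ioi 0))
    (hne : ∃ r > (0:ℝ), η r ≠ 0)
    (hint : IntegrableOn (fun r => r * deriv η r ^ 2 + η r ^ 2 / r) (Ioi 0))
    (heq : ∀ r > (0:ℝ),
      deriv (fun x => x * deriv η x) r +
        r * (64 / (8 + r ^ 2) ^ 2 + β / r ^ 2) * η r = 0) :
    β = -1 ∧ ∃ c : ℝ, ∀ r > (0:ℝ), η r = c * (4 * r / (8 + r ^ 2)) :=
  limit_problem_unique_negative_eigenvalue_general β η hreg hne hint heq
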